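/- Let E be a lattice effect algebra and define x·y := ((x'∧y)⊕y')' for all x,y ∈ E. Then for all a, b ∈ E: a·(b'·a)' = (b'·a)'·a and (b'·a)'·a = (a'·b)'·b (i.e., the identities (NG6) hold in (E;·,',0,1)). -/

import Mathlib

/-- An effect algebra: a partial algebra (E;⊕,',0,1). The partial operation ⊕ is
modeled by a definedness predicate `D` together with a total function `add` whose
value is only meaningful on defined pairs. -/
structure EffectAlgebra (E : Type*) where
  /-- definedness of `x ⊕ y` -/
  D : E → E → Prop
  /-- the value of `x ⊕ y` (meaningful only when `D x y`) -/
  add : E → E → E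
  zero : E
  one : E
  /-- the complement `x'` -/
  compl : E → E
  /-- (E1) commutativity -/
  E1 : ∀ x y, D x y → D y x ∧ add x y = add y x
  /-- (E2) associativity -/
  E2 : ∀ x y z, D x y → D (add x y) z →
    D y z ∧ D x (add y z) ∧ add (add x y) z = add x (add y z)
  /-- (E3) existence of the complement -/
  E3a : ∀ x, D x (compl x)
  E3b : ∀ x, add x (compl x) = one
  /-- (E3) uniqueness of the complement -/
  E3c : ∀ x y, D x y → add x y = one → y = compl x
  /-- (E4) -/
  E4 : ∀ x, D x one → x = zero

/-- The induced order of an effect algebra: `a ≤ b` iff `a ⊕ c = b` for some `c`. -/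
def EffectAlgebra.le {E : Type*} (A : EffectAlgebra E) (a b : E) : Prop :=
  ∃ c, A.D a c ∧ A.add a c = b

/-- A lattice effect algebra: an effect algebra whose induced order is a lattice,
with meet `inf` and join `sup`. -/
structure LatticeEffectAlgebra (E : Type*) extends EffectAlgebra E where
  inf : E → E → E
  sup : E → E → E
  inf_le_left : ∀ a b, toEffectAlgebra.le (inf a b) a
  inf_le_right : ∀ a b, toEffectAlgebra.le (inf a b) b
  le_inf : ∀ a b c, toEffectAlgebra.le c a → toEffectAlgebra.le c b →
    toEffectAlgebra.le c (inf a b)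
  le_sup_left : ∀ a b, toEffectAlgebra.le a (sup a b)
  le_sup_right : ∀ a b, toEffectAlgebra.le b (sup a b)
  sup_le : ∀ a b c, toEffectAlgebra.le a c → toEffectAlgebra.le b c →
    toEffectAlgebra.le (sup a b) c

/-- The total operation `x·y := ((x'∧y)⊕y')'` on a lattice effect algebra
(well defined since `x'∧y ≤ y`). -/
def LatticeEffectAlgebra.prod {E : Type*} (A : LatticeEffectAlgebra E) (x y : E) : E :=
  A.compl (A.add (A.inf (A.compl x) y) (A.compl y))

namespace EffectAlgebra

variable {E : Type*} (A : EffectAlgebra E)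

lemma compl_compl (x : E) : A.compl (A.compl x) = x := by
  obtain ⟨hD, hadd⟩ := A.E1 _ _ (A.E3a x)
  exact (A.E3c _ _ hD (by rw [← hadd, A.E3b])).symm

lemma add_assoc_left {x y z : E} (hyz : A.D y z) (hx : A.D x (A.add y z)) :
    A.D x y ∧ A.D (A.add x y) z ∧ A.add (A.add x y) z = A.add x (A.add y z) := by
  have h := A.E1
  have h₂ := A.E2 z y x (h _ _ hyz).1
  grind

lemma D_zero_and_add_zero (x : E) : A.D x A.zero ∧ A.add x A.zero = x := by
  have h_compl_one : A.compl A.one = A.zero := A.E4 _ (A.E1 _ _ (A.E3a A.one)).1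
  have hD := A.E3a A.one
  have hadd := A.E3b A.one
  rw [h_compl_one] at hD hadd
  obtain ⟨hD', hadd'⟩ := A.E1 _ _ (A.E3a x)
  rw [A.E3b] at hadd'
  obtain ⟨h₁, h₂, h₃⟩ := A.E2 (A.compl x) x A.zero hD' (by rwa [← hadd'])
  rw [← hadd', hadd] at h₃
  exact ⟨h₁, (A.E3c _ _ h₂ h₃.symm).trans (A.compl_compl x)⟩

lemma le_refl (x : E) : A.le x x :=
  ⟨A.zero, A.D_zero_and_add_zero x⟩

lemma le_antisymm {x y : E} (hxy : A.le x y) (hyx : A.le y x) : x = y := by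
  obtain ⟨c, hc, rfl⟩ := hxy
  obtain ⟨d, hd, hx⟩ := hyx
  obtain ⟨hcd, hxcd, heq⟩ := A.E2 _ _ _ hc hd
  obtain ⟨hD, hadd⟩ := A.E1 _ _ (A.E3a x)
  rw [A.E3b] at hadd
  have h_one := (A.add_assoc_left hxcd (by rwa [← heq, hx] : A.D (A.compl x) _)).2.1
  rw [← hadd] at h_one
  have hd_zero : d = A.zero := A.E4 _ (A.E2 _ _ _ hcd (A.E1 _ _ h_one).1).1
  rw [hd_zero, (A.D_zero_and_add_zero _).2] at hx
  exact hx.symm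

end EffectAlgebra

namespace LatticeEffectAlgebra

variable {E : Type*} (A : LatticeEffectAlgebra E)

lemma inf_comm (x y : E) : A.inf x y = A.inf y x :=
  A.le_antisymm (A.le_inf _ _ _ (A.inf_le_right _ _) (A.inf_le_left _ _))
    (A.le_inf _ _ _ (A.inf_le_right _ _) (A.inf_le_left _ _))

lemma inf_eq_left {x y : E} (h : A.le x y) : A.inf x y = x :=
  A.le_antisymm (A.inf_le_left _ _) (A.le_inf _ _ _ (A.le_refl x) h)

/-- Both sides of the first identity of (NG6) compute the meet. -/
lemma prod_compl_prod_eq_inf (a b : E) :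
    A.prod a (A.compl (A.prod (A.compl b) a)) = A.inf b a ∧
      A.prod (A.compl (A.prod (A.compl b) a)) a = A.inf b a := by
  obtain ⟨d, hmd, ha⟩ := A.inf_le_right b a
  simp only [prod, A.compl_compl]
  generalize A.inf b a = m at *
  obtain ⟨hdm, hcomm⟩ := A.E1 _ _ hmd
  have hDa := A.E3a a
  have h_one := A.E3b a
  obtain ⟨hda, hmda, hm⟩ := A.E2 m d (A.compl a) hmd (by rwa [ha])
  rw [ha, h_one] at hm
  obtain ⟨hma, hdma, hd⟩ := A.E2 d m (A.compl a) hdm (by rwa [← hcomm, ha])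
  rw [← hcomm, ha, h_one] at hd
  have hc : A.compl (A.add m (A.compl a)) = d := by
    rw [A.E3c _ _ hdma hd.symm, A.compl_compl]
  have hm_compl : A.compl (A.add d (A.compl a)) = m := by
    rw [A.E3c _ _ hmda hm.symm, A.compl_compl]
  obtain ⟨ham, hamc⟩ := A.E1 _ _ hma
  rw [hc, A.inf_eq_left ⟨m, ham, hamc.symm⟩, A.inf_eq_left ⟨m, hdm, hcomm.symm.trans ha⟩,
    ← (A.E1 _ _ hda).2]
  exact ⟨hm_compl, hm_compl⟩

end LatticeEffectAlgebra

/-- (NG6) holds in `(E;·,',0,1)` for a lattice effect algebra `E` with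
`x·y := ((x'∧y)⊕y')'`: `a·(b'·a)' = (b'·a)'·a` and `(b'·a)'·a = (a'·b)'·b`. -/
theorem ng6_holds {E : Type*} (A : LatticeEffectAlgebra E) (a b : E) :
    A.prod a (A.compl (A.prod (A.compl b) a)) = A.prod (A.compl (A.prod (A.compl b) a)) a ∧
    A.prod (A.compl (A.prod (A.compl b) a)) a = A.prod (A.compl (A.prod (A.compl a) b)) b := by
  obtain ⟨h₁, h₂⟩ := A.prod_compl_prod_eq_inf a b
  rw [h₁, h₂, (A.prod_compl_prod_eq_inf b a).2]
  exact ⟨rfl, A.inf_comm b a⟩
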